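/- Let S be an abelian subgroup of the Pauli group G_d^n with no nontrivial scalars and Nat.card S = d^n, let ψ be a nonzero vector in Fix(S), and let w_1, …, w_K ∈ G_d^n with w_1 = 1 be such that the vectors w_i.mulVec ψ are linearly independent over ℂ; let Q be their ℂ-span. If the set {w_1, …, w_K} is a subgroup of G_d^n (i.e. is closed under multiplication and inverses), then Q is a stabilizer code: there exists an abelian subgroup H of G_d^n with no nontrivial scalars whose fixed subspace Fix(H) equals Q. -/

import Mathlib

open Matrix

noncomputable def q (d : ℕ) : ℂ := Complex.exp (2 * Real.pi * Complex.I / d)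

/-- Dot product of two vectors over `ZMod d`. -/
def dotp {n d : ℕ} (A B : Fin n → ZMod d) : ZMod d := ∑ i, A i * B i

/-- The Pauli word `W(U,V)` with entries `q^{⟨U,J⟩}` at `(J, K)` when `J = K + V`. -/
noncomputable def PauliWord (d n : ℕ) (U V : Fin n → ZMod d) :
    Matrix (Fin n → ZMod d) (Fin n → ZMod d) ℂ :=
  Matrix.of fun J K => if J = K + V then q d ^ (dotp U J).val else 0

/-- The n-qudit Pauli group, as a set of matrices. -/
noncomputable def PauliSet (d n : ℕ) : Set (Matrix (Fin n → ZMod d) (Fin n → ZMod d) ℂ) :=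
  {g | ∃ (k : ZMod d) (U V : Fin n → ZMod d), g = q d ^ k.val • PauliWord d n U V}

/-- The subspace of states fixed by every matrix in `S`. -/
noncomputable def FixSubspace (d n : ℕ) [NeZero d]
    (S : Set (Matrix (Fin n → ZMod d) (Fin n → ZMod d) ℂ)) :
    Submodule ℂ ((Fin n → ZMod d) → ℂ) where
  carrier := {ψ | ∀ s ∈ S, s.mulVec ψ = ψ}
  add_mem' := by
    intro a b ha hb s hs
    simp [Matrix.mulVec_add, ha s hs, hb s hs]
  zero_mem' := by
    intro s hs
    simp [Matrix.mulVec_zero]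
  smul_mem' := by
    intro c a ha s hs
    simp [Matrix.mulVec_smul, ha s hs]

/-! Conjugating a Pauli matrix by a Pauli matrix multiplies it by a scalar. Hence the sum of the
conjugates of `s ∈ S` under the group `W` of word operators is `|W| • s` if `s` commutes with `W`,
and `0` otherwise. Apply the sum of all conjugates `w s w⁻¹` to a vector `φ` fixed by
`H = {s ∈ S | s commutes with W}`: grouped by `s` it is `|W| |H| • φ`, and grouped by `w` it is a
sum of vectors `w χ` with `χ ∈ Fix S`. So `Fix H` is spanned by the translates of `Fix S`. Only
the identity of `S` has nonzero trace, so `|S| * dim Fix S = d ^ n` and `Fix S` is a line. -/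

section ConjSum

variable {G A k : Type*} [Group G] [Fintype G]

/-- The sum of the conjugates `σ g * a * (σ g)⁻¹` of `a`: the unnormalised twirl of `a` by `G`. -/
def conjSum [Semiring A] (σ : G →* A) (a : A) : A := ∑ g, σ g * a * σ g⁻¹

lemma commute_conjSum [Semiring A] (σ : G →* A) (a : A) (h : G) :
    Commute (σ h) (conjSum σ a) := by
  calc σ h * conjSum σ a = ∑ g, σ (h * g) * a * σ (h * g)⁻¹ * σ h := by
        simp only [conjSum, Finset.mul_sum, _root_.mul_inv_rev, map_mul, mul_assoc]
        simp only [← map_mul, inv_mul_cancel, mul_one]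
    _ = conjSum σ a * σ h := by
        rw [← Finset.sum_mul, conjSum,
          ← (Group.mulLeft_bijective h).sum_comp fun g => σ g * a * σ g⁻¹]

lemma conjSum_of_commute [Semiring A] {σ : G →* A} {a : A} (h : ∀ g, Commute (σ g) a) :
    conjSum σ a = Fintype.card G • a := by
  simp only [conjSum, (h _).eq, mul_assoc, ← map_mul, mul_inv_cancel, map_one, mul_one,
    Finset.sum_const, Finset.card_univ]

lemma conjSum_eq_zero_of_not_commute [Field k] [Ring A] [Algebra k A] {σ : G →* A} {a : A}
    (hscalar : ∀ g, ∃ c : k, σ g * a = c • (a * σ g)) (hne : ¬ ∀ g, Commute (σ g) a) :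
    conjSum σ a = 0 := by
  choose c hc using hscalar
  obtain ⟨h, hh⟩ := not_forall.1 hne
  have conjSum_eq : conjSum σ a = (∑ g, c g) • a := by
    simp only [conjSum, hc, smul_mul_assoc, mul_assoc, ← map_mul, mul_inv_cancel, map_one,
      mul_one, Finset.sum_smul]
  have a_mul_ne_zero : a * σ h ≠ 0 := fun h0 => hh <| by
    rw [Commute, SemiconjBy, hc, h0, smul_zero]
  have c_ne_one : c h ≠ 1 := fun h1 => hh <| by
    rw [Commute, SemiconjBy, hc, h1, one_smul]
  have smul_eq : ((∑ g, c g) * (c h - 1)) • (a * σ h) = 0 := by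
    have := (commute_conjSum σ a h).eq
    rwa [conjSum_eq, mul_smul_comm, smul_mul_assoc, hc, smul_smul, ← sub_eq_zero, ← sub_smul,
      ← mul_sub_one] at this
  have sum_eq_zero : ∑ g, c g = 0 :=
    (mul_eq_zero.1 <| (smul_eq_zero.1 smul_eq).resolve_right a_mul_ne_zero).resolve_right
      (sub_ne_zero.2 c_ne_one)
  rw [conjSum_eq, sum_eq_zero, zero_smul]

end ConjSum

section Representation

variable {k V G W : Type*} [Field k] [AddCommGroup V] [Module k V] [Group G] [Group W]

lemma sum_apply_mem_invariants [Fintype G] (ρ : Representation k G V) (v : V) :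
    ∑ g, ρ g v ∈ ρ.invariants := fun h => by
  simp only [map_sum, ← Module.End.mul_apply, ← map_mul]
  exact (Group.mulLeft_bijective h).sum_comp fun g => ρ g v

lemma sum_trace_eq_card_mul_finrank_invariants [CharZero k] [Fintype G] [FiniteDimensional k V]
    (ρ : Representation k G V) :
    ∑ g, LinearMap.trace k V (ρ g) = Fintype.card G * Module.finrank k ρ.invariants := by
  have card_ne_zero : (Fintype.card G : k) ≠ 0 := Nat.cast_ne_zero.2 Fintype.card_ne_zero
  let := invertibleOfNonzero card_ne_zero
  rw [← ρ.isProj_averageMap.trace]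
  simp [GroupAlgebra.average, card_ne_zero]

lemma sum_conjSum_apply_mem_iSup_map_invariants [Fintype G] [Fintype W]
    (ρ : Representation k G V) (σ : Representation k W V) (v : V) :
    ∑ g, conjSum σ (ρ g) v ∈ ⨆ w, ρ.invariants.map (σ w) := by
  have sum_eq : ∑ g, conjSum σ (ρ g) v = ∑ w, σ w (∑ g, ρ g (σ w⁻¹ v)) := by
    simp only [conjSum, LinearMap.sum_apply, Module.End.mul_apply, map_sum]
    exact Finset.sum_comm
  rw [sum_eq]
  exact sum_mem fun w _ => Submodule.mem_iSup_of_mem w <|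
    Submodule.mem_map_of_mem (sum_apply_mem_invariants ρ _)

theorem mem_iSup_map_invariants_iff [CharZero k] [Finite G] [Finite W]
    {ρ : Representation k G V} {σ : Representation k W V}
    (hscalar : ∀ w g, ∃ c : k, σ w * ρ g = c • (ρ g * σ w)) {v : V} :
    v ∈ ⨆ w, ρ.invariants.map (σ w) ↔ ∀ g, (∀ w, Commute (σ w) (ρ g)) → ρ g v = v := by
  classical
  have := Fintype.ofFinite G
  have := Fintype.ofFinite W
  refine ⟨fun hv g hg => ?_, fun hv => ?_⟩
  · suffices ⨆ w, ρ.invariants.map (σ w) ≤ LinearMap.eqLocus (ρ g) LinearMap.id from this hv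
    refine iSup_le fun w => Submodule.map_le_iff_le_comap.2 fun u hu => ?_
    change (ρ g * σ w) u = σ w u
    rw [← (hg w).eq, Module.End.mul_apply, hu g]
  · let H := {g | ∀ w, Commute (σ w) (ρ g)}.toFinset
    have conjSum_apply (g : G) :
        conjSum σ (ρ g) v = if g ∈ H then (Fintype.card W : k) • v else 0 := by
      split_ifs with hg <;> rw [Set.mem_toFinset, Set.mem_ofPred_eq] at hg
      · rw [conjSum_of_commute hg, LinearMap.smul_apply, hv g hg, Nat.cast_smul_eq_nsmul]
      · rw [conjSum_eq_zero_of_not_commute (hscalar · g) hg, LinearMap.zero_apply]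
    have sum_eq : ∑ g, conjSum σ (ρ g) v = ((H.card * Fintype.card W : ℕ) : k) • v := by
      simp only [conjSum_apply, Finset.sum_ite_mem, Finset.univ_inter, Finset.sum_const,
        Nat.cast_smul_eq_nsmul, smul_smul]
    have card_ne_zero : H.card * Fintype.card W ≠ 0 :=
      mul_ne_zero (Finset.card_ne_zero_of_mem (a := 1) (by simp [H])) Fintype.card_ne_zero
    exact (Submodule.smul_mem_iff _ (Nat.cast_ne_zero.2 card_ne_zero)).1
      (sum_eq ▸ sum_conjSum_apply_mem_iSup_map_invariants ρ σ v)

end Representation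

section Pauli

variable {d n : ℕ}

lemma dotp_eq_dotProduct (A B : Fin n → ZMod d) : dotp A B = A ⬝ᵥ B := rfl

variable [NeZero d]

lemma q_pow_val (x : ZMod d) : q d ^ x.val = ZMod.stdAddChar x := by
  rw [q, ZMod.stdAddChar_apply, ZMod.toCircle_apply, ← Complex.exp_nat_mul]
  congr 1
  ring

lemma pauliWord_apply (U V J L : Fin n → ZMod d) :
    PauliWord d n U V J L = if J = L + V then ZMod.stdAddChar (U ⬝ᵥ J) else 0 := by
  rw [PauliWord, of_apply, q_pow_val, dotp_eq_dotProduct]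

lemma pauliWord_zero_zero : PauliWord d n 0 0 = 1 := by
  ext J L
  simp [pauliWord_apply, one_apply]

lemma pauliWord_mul_pauliWord (U V U' V' : Fin n → ZMod d) :
    PauliWord d n U V * PauliWord d n U' V' =
      ZMod.stdAddChar (-(U' ⬝ᵥ V)) • PauliWord d n (U + U') (V + V') := by
  ext J L
  have eq_iff : J = L + (V + V') ↔ J = L + V' + V := by rw [add_comm V, add_assoc]
  simp only [mul_apply, Matrix.smul_apply, pauliWord_apply, mul_ite, mul_zero,
    Finset.sum_ite_eq', Finset.mem_univ, if_true, smul_eq_mul, eq_iff, ite_mul, zero_mul]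
  split_ifs with h
  · rw [← AddChar.map_add_eq_mul, ← AddChar.map_add_eq_mul, h]
    congr 1
    simp only [add_dotProduct, dotProduct_add]
    ring
  · rfl

lemma pauliWord_mul_comm (U V U' V' : Fin n → ZMod d) :
    PauliWord d n U V * PauliWord d n U' V' =
      ZMod.stdAddChar (U ⬝ᵥ V' - U' ⬝ᵥ V) • (PauliWord d n U' V' * PauliWord d n U V) := by
  rw [pauliWord_mul_pauliWord, pauliWord_mul_pauliWord, smul_smul, ← AddChar.map_add_eq_mul,
    add_comm U, add_comm V]
  congr 2
  abel

lemma trace_pauliWord_eq_zero {U V : Fin n → ZMod d} (h : U ≠ 0 ∨ V ≠ 0) :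
    (PauliWord d n U V).trace = 0 := by
  by_cases hV : V = 0
  · let χ : AddChar (Fin n → ZMod d) ℂ :=
      ZMod.stdAddChar.compAddMonoidHom (AddMonoidHom.mk' (U ⬝ᵥ ·) (dotProduct_add U))
    have χ_ne_one : χ ≠ 1 := fun hχ => by
      refine h.resolve_right (not_not.2 hV) (dotProduct_eq_zero _ fun J => ?_)
      exact ZMod.injective_stdAddChar <|
        (DFunLike.congr_fun hχ J).trans (AddChar.map_zero_eq_one _).symm
    calc (PauliWord d n U V).trace = ∑ J, χ J := by
          simp [trace, pauliWord_apply, hV, χ]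
      _ = 0 := AddChar.sum_eq_zero_of_ne_one χ_ne_one
  · simp [trace, pauliWord_apply, hV]

lemma finite_pauliSet : (PauliSet d n).Finite :=
  (Set.finite_range fun x : ZMod d × (Fin n → ZMod d) × (Fin n → ZMod d) =>
    q d ^ x.1.val • PauliWord d n x.2.1 x.2.2).subset fun _ ⟨k, U, V, h⟩ => ⟨(k, U, V), h.symm⟩

lemma exists_mul_eq_smul_mul_of_mem_pauliSet {a b : Matrix (Fin n → ZMod d) (Fin n → ZMod d) ℂ}
    (ha : a ∈ PauliSet d n) (hb : b ∈ PauliSet d n) : ∃ c : ℂ, a * b = c • (b * a) := by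
  obtain ⟨k, U, V, rfl⟩ := ha
  obtain ⟨l, U', V', rfl⟩ := hb
  refine ⟨ZMod.stdAddChar (U ⬝ᵥ V' - U' ⬝ᵥ V), ?_⟩
  rw [smul_mul_smul_comm, smul_mul_smul_comm, pauliWord_mul_comm, smul_comm, mul_comm (q d ^ _)]

lemma trace_eq_zero_of_mem_pauliSet {a : Matrix (Fin n → ZMod d) (Fin n → ZMod d) ℂ}
    (ha : a ∈ PauliSet d n) (hne : ∀ c : ℂ, a ≠ c • 1) : a.trace = 0 := by
  obtain ⟨k, U, V, rfl⟩ := ha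
  have : U ≠ 0 ∨ V ≠ 0 := by
    by_contra! h
    exact hne (q d ^ k.val) (by rw [h.1, h.2, pauliWord_zero_zero])
  rw [trace_smul, trace_pauliWord_eq_zero this, smul_zero]

/-- A subgroup of the `n`-qudit Pauli group, as a set of matrices. -/
structure IsPauliSubgroup (S : Set (Matrix (Fin n → ZMod d) (Fin n → ZMod d) ℂ)) : Prop where
  subset : S ⊆ PauliSet d n
  one_mem : 1 ∈ S
  mul_mem : ∀ a ∈ S, ∀ b ∈ S, a * b ∈ S
  exists_mul_eq_one : ∀ a ∈ S, ∃ b ∈ S, a * b = 1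

/-- A stabilizer group: a subgroup of the Pauli group containing no scalar matrix except `1`.
Commutativity is not a field but the lemma `IsStabilizerGroup.mul_comm`. -/
structure IsStabilizerGroup (S : Set (Matrix (Fin n → ZMod d) (Fin n → ZMod d) ℂ)) : Prop
    extends IsPauliSubgroup S where
  eq_one_of_smul_one_mem : ∀ c : ℂ, c • (1 : Matrix (Fin n → ZMod d) (Fin n → ZMod d) ℂ) ∈ S →
    c • (1 : Matrix (Fin n → ZMod d) (Fin n → ZMod d) ℂ) = 1

variable {S W : Set (Matrix (Fin n → ZMod d) (Fin n → ZMod d) ℂ)}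

namespace IsPauliSubgroup

/-- The set `S` as a bundled submonoid of matrices, whose coercion to a type carries the group
structure of `S`. -/
def submonoid (hS : IsPauliSubgroup S) :
    Submonoid (Matrix (Fin n → ZMod d) (Fin n → ZMod d) ℂ) where
  carrier := S
  one_mem' := hS.one_mem
  mul_mem' ha hb := hS.mul_mem _ ha _ hb

lemma isUnit (hS : IsPauliSubgroup S) (a : hS.submonoid) : IsUnit a := by
  obtain ⟨b, hb, hab⟩ := hS.exists_mul_eq_one a a.2
  exact ⟨⟨a, ⟨b, hb⟩, Subtype.ext hab, Subtype.ext (mul_eq_one_comm.1 hab)⟩, rfl⟩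

noncomputable instance (hS : IsPauliSubgroup S) : Group hS.submonoid := groupOfIsUnit hS.isUnit

instance (hS : IsPauliSubgroup S) : Finite hS.submonoid := finite_pauliSet.subset hS.subset

/-- The representation of a Pauli subgroup on state vectors by matrix-vector multiplication. -/
noncomputable def rep (hS : IsPauliSubgroup S) :
    Representation ℂ hS.submonoid ((Fin n → ZMod d) → ℂ) :=
  (toLinAlgEquiv' : Matrix (Fin n → ZMod d) (Fin n → ZMod d) ℂ ≃ₐ[ℂ] _).toMonoidHom.comp
    hS.submonoid.subtype

lemma rep_apply (hS : IsPauliSubgroup S) (s : hS.submonoid) : hS.rep s = toLin' s := rfl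

lemma invariants_rep (hS : IsPauliSubgroup S) : hS.rep.invariants = FixSubspace d n S := by
  ext φ
  simp only [Representation.mem_invariants, rep_apply, toLin'_apply]
  exact Subtype.forall

theorem fixSubspace_inter_centralizer (hS : IsPauliSubgroup S) (hW : IsPauliSubgroup W) :
    FixSubspace d n (S ∩ W.centralizer) = ⨆ w : W, (FixSubspace d n S).map (toLin' w.1) := by
  have hscalar (w : hW.submonoid) (s : hS.submonoid) :
      ∃ c : ℂ, hW.rep w * hS.rep s = c • (hS.rep s * hW.rep w) := by
    obtain ⟨c, hc⟩ := exists_mul_eq_smul_mul_of_mem_pauliSet (hW.subset w.2) (hS.subset s.2)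
    refine ⟨c, ?_⟩
    simp only [rep_apply, Module.End.mul_eq_comp, ← toLin'_mul, ← map_smul, hc]
  have commute_iff (w : hW.submonoid) (s : hS.submonoid) :
      Commute (hW.rep w) (hS.rep s) ↔ w.1 * s.1 = s.1 * w.1 := by
    rw [Commute, SemiconjBy, rep_apply, rep_apply, Module.End.mul_eq_comp,
      Module.End.mul_eq_comp, ← toLin'_mul, ← toLin'_mul, toLin'.injective.eq_iff]
  ext φ
  rw [← hS.invariants_rep]
  refine Iff.trans ?_ (mem_iSup_map_invariants_iff hscalar).symm
  simp only [commute_iff]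
  exact ⟨fun h s hs => h s ⟨s.2, fun w hw => hs ⟨w, hw⟩⟩,
    fun h s hs => h ⟨s, hs.1⟩ fun w => hs.2 w w.2⟩

lemma inter_centralizer (hS : IsPauliSubgroup S)
    (W : Set (Matrix (Fin n → ZMod d) (Fin n → ZMod d) ℂ)) :
    IsPauliSubgroup (S ∩ W.centralizer) where
  subset := Set.inter_subset_left.trans hS.subset
  one_mem := ⟨hS.one_mem, Set.one_mem_centralizer⟩
  mul_mem a ha b hb := ⟨hS.mul_mem a ha.1 b hb.1, Set.mul_mem_centralizer ha.2 hb.2⟩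
  exists_mul_eq_one a ha := by
    obtain ⟨b, hb, hab⟩ := hS.exists_mul_eq_one a ha.1
    have hba : b * a = 1 := mul_eq_one_comm.1 hab
    exact ⟨b, ⟨hb, fun w hw => Commute.units_inv_right (u := ⟨a, b, hab, hba⟩) (ha.2 w hw)⟩, hab⟩

lemma range {ι : Type*} {w : ι → Matrix (Fin n → ZMod d) (Fin n → ZMod d) ℂ}
    (hw : ∀ i, w i ∈ PauliSet d n) (hone : ∃ i, w i = 1) (hmul : ∀ i j, ∃ l, w i * w j = w l)
    (hinv : ∀ i, ∃ l, w i * w l = 1) : IsPauliSubgroup (Set.range w) where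
  subset := Set.range_subset_iff.2 hw
  one_mem := hone
  mul_mem := by
    rintro _ ⟨i, rfl⟩ _ ⟨j, rfl⟩
    exact (hmul i j).imp fun _ h => h.symm
  exists_mul_eq_one := Set.forall_mem_range.2 fun i => Set.exists_range_iff.2 (hinv i)

end IsPauliSubgroup

namespace IsStabilizerGroup

protected lemma mul_comm (hS : IsStabilizerGroup S) : ∀ a ∈ S, ∀ b ∈ S, a * b = b * a := by
  intro a ha b hb
  obtain ⟨c, hc⟩ := exists_mul_eq_smul_mul_of_mem_pauliSet (hS.subset ha) (hS.subset hb)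
  obtain ⟨x, hx, hbax⟩ := hS.exists_mul_eq_one _ (hS.mul_mem b hb a ha)
  have smul_one_mem : c • (1 : Matrix _ _ ℂ) ∈ S := by
    rw [← hbax, ← smul_mul_assoc, ← hc]
    exact hS.mul_mem _ (hS.mul_mem a ha b hb) x hx
  rw [hc, ← smul_one_mul, hS.eq_one_of_smul_one_mem c smul_one_mem, one_mul]

lemma card_mul_finrank_fixSubspace (hS : IsStabilizerGroup S) :
    Nat.card S * Module.finrank ℂ (FixSubspace d n S) = d ^ n := by
  have := Fintype.ofFinite hS.submonoid
  have trace_eq_zero (s : hS.submonoid) (hs : s ≠ 1) : (s.1).trace = 0 :=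
    trace_eq_zero_of_mem_pauliSet (hS.subset s.2) fun c hc =>
      hs <| Subtype.ext <| hc.trans <| hS.eq_one_of_smul_one_mem c (hc ▸ s.2)
  have card_eq : Nat.card S = Fintype.card hS.submonoid :=
    Nat.card_eq_fintype_card (α := hS.submonoid)
  have sum_trace : ∑ s, LinearMap.trace ℂ _ (hS.rep s) = (d : ℂ) ^ n := by
    simp only [IsPauliSubgroup.rep_apply, trace_toLin'_eq]
    rw [Fintype.sum_eq_single 1 trace_eq_zero]
    simp [trace_one, ZMod.card]
  rw [sum_trace_eq_card_mul_finrank_invariants, hS.invariants_rep, ← card_eq] at sum_trace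
  exact_mod_cast sum_trace

lemma fixSubspace_eq_span_singleton (hS : IsStabilizerGroup S) (hcard : Nat.card S = d ^ n)
    {ψ : (Fin n → ZMod d) → ℂ} (hψS : ψ ∈ FixSubspace d n S) (hψ : ψ ≠ 0) :
    FixSubspace d n S = Submodule.span ℂ {ψ} := by
  have finrank_eq_one : Module.finrank ℂ (FixSubspace d n S) = 1 := by
    have h := hS.card_mul_finrank_fixSubspace
    rwa [hcard, Nat.mul_eq_left (pow_ne_zero n (NeZero.ne d))] at h
  refine (Submodule.eq_of_le_of_finrank_eq ?_ ?_).symm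
  · rwa [Submodule.span_singleton_le_iff_mem]
  · rw [finrank_span_singleton hψ, finrank_eq_one]

lemma inter_centralizer (hS : IsStabilizerGroup S)
    (W : Set (Matrix (Fin n → ZMod d) (Fin n → ZMod d) ℂ)) :
    IsStabilizerGroup (S ∩ W.centralizer) where
  toIsPauliSubgroup := hS.toIsPauliSubgroup.inter_centralizer W
  eq_one_of_smul_one_mem c hc := hS.eq_one_of_smul_one_mem c hc.1

end IsStabilizerGroup

theorem cws_group_codewords_is_stabilizer_general (hS : IsStabilizerGroup S)
    (hcard : Nat.card S = d ^ n) {ψ : (Fin n → ZMod d) → ℂ} (hψS : ψ ∈ FixSubspace d n S)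
    (hψ : ψ ≠ 0) (hW : IsPauliSubgroup W) :
    ∃ H, IsStabilizerGroup H ∧ FixSubspace d n H = Submodule.span ℂ ((· *ᵥ ψ) '' W) := by
  refine ⟨S ∩ W.centralizer, hS.inter_centralizer W, ?_⟩
  rw [hS.fixSubspace_inter_centralizer hW, hS.fixSubspace_eq_span_singleton hcard hψS hψ,
    Set.image_eq_range, Submodule.span_range_eq_iSup]
  simp only [Submodule.map_span, Set.image_singleton, toLin'_apply]

end Pauli

theorem cws_group_codewords_is_stabilizer (d n K : ℕ) [NeZero d] (hd : 2 ≤ d) (hn : 1 ≤ n)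
    (S : Set (Matrix (Fin n → ZMod d) (Fin n → ZMod d) ℂ))
    (hSsub : S ⊆ PauliSet d n)
    (hS1 : (1 : Matrix (Fin n → ZMod d) (Fin n → ZMod d) ℂ) ∈ S)
    (hSmul : ∀ a ∈ S, ∀ b ∈ S, a * b ∈ S)
    (hSinv : ∀ a ∈ S, ∃ b ∈ S, a * b = 1)
    (hScomm : ∀ a ∈ S, ∀ b ∈ S, a * b = b * a)
    (hSscal : ∀ c : ℂ, c • (1 : Matrix (Fin n → ZMod d) (Fin n → ZMod d) ℂ) ∈ S →
      c • (1 : Matrix (Fin n → ZMod d) (Fin n → ZMod d) ℂ) = 1)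
    (hcard : Nat.card S = d ^ n)
    (ψ : (Fin n → ZMod d) → ℂ) (hψS : ψ ∈ FixSubspace d n S) (hψ : ψ ≠ 0)
    (hK : 0 < K)
    (w : Fin K → Matrix (Fin n → ZMod d) (Fin n → ZMod d) ℂ)
    (hw : ∀ i, w i ∈ PauliSet d n)
    (hw1 : w ⟨0, hK⟩ = 1)
    (hli : LinearIndependent ℂ (fun i => (w i).mulVec ψ))
    (hWmul : ∀ i j, ∃ l, w i * w j = w l)
    (hWinv : ∀ i, ∃ l, w i * w l = 1) :
    ∃ H : Set (Matrix (Fin n → ZMod d) (Fin n → ZMod d) ℂ),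
      H ⊆ PauliSet d n ∧
      (1 : Matrix (Fin n → ZMod d) (Fin n → ZMod d) ℂ) ∈ H ∧
      (∀ a ∈ H, ∀ b ∈ H, a * b ∈ H) ∧
      (∀ a ∈ H, ∃ b ∈ H, a * b = 1) ∧
      (∀ a ∈ H, ∀ b ∈ H, a * b = b * a) ∧
      (∀ c : ℂ, c • (1 : Matrix (Fin n → ZMod d) (Fin n → ZMod d) ℂ) ∈ H →
        c • (1 : Matrix (Fin n → ZMod d) (Fin n → ZMod d) ℂ) = 1) ∧
      FixSubspace d n H = Submodule.span ℂ (Set.range fun i => (w i).mulVec ψ) := by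
  obtain ⟨H, hH, hfix⟩ := cws_group_codewords_is_stabilizer_general
    ⟨⟨hSsub, hS1, hSmul, hSinv⟩, hSscal⟩ hcard hψS hψ (.range hw ⟨_, hw1⟩ hWmul hWinv)
  exact ⟨H, hH.subset, hH.one_mem, hH.mul_mem, hH.exists_mul_eq_one, hH.mul_comm,
    hH.eq_one_of_smul_one_mem, by rw [hfix, ← Set.range_comp]; rfl⟩
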